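/- arXiv:1804.01458 — 3 statements merged into one kernel-verified Lean document; each statement's English description precedes it below -/
import Mathlib

section
/- (Construction of the matching warping function.) Let K ≥ 1 and let 0 = a₀ < a₁ < ⋯ < a_K = 1 and 0 = b₀ < b₁ < ⋯ < b_K = 1 be two partitions of [0,1]. Let g, g̃ : [0,1] → ℝ be continuous functions such that for each t ∈ {0, …, K−1}, g is strictly monotone on [a_t, a_{t+1}], g̃ is strictly monotone on [b_t, b_{t+1}], g is increasing on [a_t, a_{t+1}] if and only if g̃ is increasing on [b_t, b_{t+1}], and g(a_t) = g̃(b_t) for all t ∈ {0, …, K}. Then there exists a unique continuous strictly increasing bijection γ : [0,1] → [0,1] with g ∘ γ = g̃; it satisfies γ(b_t) = a_t for all t and is given piecewise on [b_t, b_{t+1}] by γ(x) = g_t^{-1}(g̃(x)), where g_t^{-1} denotes the inverse of the restriction of g to [a_t, a_{t+1}]. -/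
/-!
Call `x` and `y` matched when, for some `t < K`, `x ∈ [b_t, b_{t+1}]`, `y ∈ [a_t, a_{t+1}]` and
`g y = g̃ x`. This relation is symmetric under exchanging the roles of `(a, g)` and `(b, g̃)`, and it
is the graph of the warping function:

* the intermediate value theorem on each piece gives every `x ∈ [0,1]` a partner
  (`Matched.exists_of_mem_piece`), and by symmetry every `y ∈ [0,1]` as well;
* if `(x, y)` and `(x', y')` are matched pairs with `x ≤ x'`, then `y ≤ y'` (`Matched.le`).

Together with the symmetric versions, the relation is the graph of an order isomorphism of `[0,1]`,
and order isomorphisms are continuous for the order topology.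

For uniqueness, a competitor `γ'` satisfies `γ' (b_t) = a_t` by induction on `t`
(`eq_of_knot`): it can neither overshoot `a_{t+1}` at `b_{t+1}`, since the value `a_{t+1}` would be
attained earlier on a piece where `g̃` is injective, nor fall short of it, since `g` is injective on
`[a_t, a_{t+1}]`. Hence `x` and `γ' x` are always matched.
-/

open Set

/-- `g` on `A` and `h` on `B` are strictly monotone in
the same direction. -/
def SameDir (g h : ℝ → ℝ) (A B : Set ℝ) : Prop :=
  (StrictMonoOn g A ∧ StrictMonoOn h B) ∨ (StrictAntiOn g A ∧ StrictAntiOn h B)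

/-- `x` and `y` lie in corresponding pieces of the partitions `b` and `a`, and `g y = h x`. -/
def Matched (K : ℕ) (a b : ℕ → ℝ) (g h : ℝ → ℝ) (x y : ℝ) : Prop :=
  ∃ t < K, x ∈ Icc (b t) (b (t + 1)) ∧ y ∈ Icc (a t) (a (t + 1)) ∧ g y = h x

lemma SameDir.symm {g h : ℝ → ℝ} {A B : Set ℝ} (H : SameDir g h A B) : SameDir h g B A := by
  rcases H with ⟨h1, h2⟩ | ⟨h1, h2⟩
  · exact Or.inl ⟨h2, h1⟩
  · exact Or.inr ⟨h2, h1⟩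

lemma SameDir.injOn {g h : ℝ → ℝ} {A B : Set ℝ} (H : SameDir g h A B) : InjOn g A := by
  rcases H with ⟨h1, _⟩ | ⟨h1, _⟩
  · exact h1.injOn
  · exact h1.injOn

lemma Matched.symm {K : ℕ} {a b : ℕ → ℝ} {g h : ℝ → ℝ} {x y : ℝ}
    (H : Matched K a b g h x y) : Matched K b a h g y x := by
  obtain ⟨t, ht, hx, hy, e⟩ := H
  exact ⟨t, ht, hy, hx, e.symm⟩

lemma knot_le {K : ℕ} {a : ℕ → ℝ} (ha : ∀ t < K, a t < a (t + 1)) {s t : ℕ}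
    (hst : s ≤ t) (ht : t ≤ K) : a s ≤ a t := by
  induction t, hst using Nat.le_induction with
  | base => exact le_rfl
  | succ n hn ih => exact (ih (by omega)).trans (ha n (by omega)).le

lemma exists_piece {K : ℕ} (hK : 1 ≤ K) {b : ℕ → ℝ} {x : ℝ} (hx : x ∈ Icc (b 0) (b K)) :
    ∃ t < K, x ∈ Icc (b t) (b (t + 1)) := by
  induction K, hK using Nat.le_induction with
  | base => exact ⟨0, one_pos, hx⟩
  | succ n hn ih =>
    rcases le_total x (b n) with h | h
    · obtain ⟨t, ht, hxt⟩ := ih ⟨hx.1, h⟩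
      exact ⟨t, by omega, hxt⟩
    · exact ⟨n, by omega, h, hx.2⟩

lemma Matched.le {K : ℕ} {a b : ℕ → ℝ} {g h : ℝ → ℝ}
    (ha : ∀ t < K, a t < a (t + 1)) (hb : ∀ t < K, b t < b (t + 1))
    (hdir : ∀ t < K, SameDir g h (Icc (a t) (a (t + 1))) (Icc (b t) (b (t + 1))))
    (hmatch : ∀ t ≤ K, g (a t) = h (b t)) {x y x' y' : ℝ}
    (H : Matched K a b g h x y) (H' : Matched K a b g h x' y') (hxx : x ≤ x') : y ≤ y' := by
  obtain ⟨t, ht, hx, hy, e⟩ := H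
  obtain ⟨s, hs, hx', hy', e'⟩ := H'
  rcases lt_trichotomy t s with hts | rfl | hst
  · exact hy.2.trans ((knot_le ha (show t + 1 ≤ s by omega) hs.le).trans hy'.1)
  · rcases hdir t ht with ⟨h1, h2⟩ | ⟨h1, h2⟩
    · rw [← h1.le_iff_le hy hy', e, e']
      exact (h2.le_iff_le hx hx').2 hxx
    · rw [← h1.le_iff_ge hy' hy, e, e']
      exact (h2.le_iff_ge hx' hx).2 hxx
  · -- Here `x` and `x'` both collapse to the common knot `b (s + 1) = b t`.
    have hbst : b (s + 1) ≤ b t := knot_le hb (by omega) ht.le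
    have hxt : x = b t := le_antisymm (by linarith [hx'.2]) hx.1
    have hxs : x' = b (s + 1) := le_antisymm hx'.2 (by linarith [hx.1])
    have hts : t = s + 1 := by
      by_contra hne
      have := knot_le hb (show s + 1 + 1 ≤ t by omega) ht.le
      have := hb (s + 1) (by omega)
      linarith [hx'.2, hx.1]
    have hyt : y = a t := (hdir t ht).injOn hy (left_mem_Icc.2 (ha t ht).le)
      (by rw [e, hxt, hmatch t ht.le])
    have hys : y' = a (s + 1) := (hdir s hs).injOn hy' (right_mem_Icc.2 (ha s hs).le)
      (by rw [e', hxs, hmatch (s + 1) hs])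
    rw [hyt, hys, hts]

/-- The intermediate value theorem on one piece. -/
lemma Matched.exists_of_mem_piece {K : ℕ} {a b : ℕ → ℝ} {g h : ℝ → ℝ}
    (ha : ∀ t < K, a t < a (t + 1)) (hb : ∀ t < K, b t < b (t + 1))
    (hg : ContinuousOn g (Icc (a 0) (a K)))
    (hdir : ∀ t < K, SameDir g h (Icc (a t) (a (t + 1))) (Icc (b t) (b (t + 1))))
    (hmatch : ∀ t ≤ K, g (a t) = h (b t)) {t : ℕ} (ht : t < K) {x : ℝ}
    (hx : x ∈ Icc (b t) (b (t + 1))) : ∃ y ∈ Icc (a t) (a (t + 1)), g y = h x := by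
  have hc : ContinuousOn g (Icc (a t) (a (t + 1))) :=
    hg.mono (Icc_subset_Icc (knot_le ha (Nat.zero_le t) ht.le) (knot_le ha ht le_rfl))
  have hbl := left_mem_Icc.2 (hb t ht).le
  have hbr := right_mem_Icc.2 (hb t ht).le
  rcases hdir t ht with ⟨_, h2⟩ | ⟨_, h2⟩
  · refine intermediate_value_Icc (ha t ht).le hc ?_
    rw [hmatch t ht.le, hmatch (t + 1) ht]
    exact ⟨h2.monotoneOn hbl hx hx.1, h2.monotoneOn hx hbr hx.2⟩
  · refine intermediate_value_Icc' (ha t ht).le hc ?_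
    rw [hmatch t ht.le, hmatch (t + 1) ht]
    exact ⟨h2.antitoneOn hx hbr hx.2, h2.antitoneOn hbl hx hx.1⟩

/-- Any increasing bijective solution of `g ∘ γ = h` sends the knots of `b` to those of `a`. -/
lemma eq_of_knot {K : ℕ} {a b : ℕ → ℝ} {g h γ : ℝ → ℝ}
    (ha : ∀ t < K, a t < a (t + 1)) (hb : ∀ t < K, b t < b (t + 1))
    (hdir : ∀ t < K, SameDir g h (Icc (a t) (a (t + 1))) (Icc (b t) (b (t + 1))))
    (hmatch : ∀ t ≤ K, g (a t) = h (b t))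
    (hmono : StrictMonoOn γ (Icc (b 0) (b K)))
    (hbij : BijOn γ (Icc (b 0) (b K)) (Icc (a 0) (a K)))
    (hγ : ∀ x ∈ Icc (b 0) (b K), g (γ x) = h x) :
    ∀ t ≤ K, γ (b t) = a t := by
  have hbmem : ∀ t ≤ K, b t ∈ Icc (b 0) (b K) := fun t ht =>
    ⟨knot_le hb (Nat.zero_le t) ht, knot_le hb ht le_rfl⟩
  have hamem : ∀ t ≤ K, a t ∈ Icc (a 0) (a K) := fun t ht =>
    ⟨knot_le ha (Nat.zero_le t) ht, knot_le ha ht le_rfl⟩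
  intro t
  induction t with
  | zero =>
    intro h0
    obtain ⟨x, hx, hxa⟩ := hbij.surjOn (hamem 0 h0)
    refine le_antisymm ?_ (hbij.mapsTo (hbmem 0 h0)).1
    rw [← hxa]
    exact hmono.monotoneOn (hbmem 0 h0) hx hx.1
  | succ t ih =>
    intro ht
    have hlt : t < K := ht
    have iht := ih hlt.le
    rcases lt_trichotomy (γ (b (t + 1))) (a (t + 1)) with hl | he | hr
    · -- Falling short contradicts injectivity of `g` on the piece of `a`.
      have h1 : a t ≤ γ (b (t + 1)) := by
        rw [← iht]
        exact hmono.monotoneOn (hbmem t hlt.le) (hbmem _ ht) (hb t hlt).le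
      exact (hdir t hlt).injOn ⟨h1, hl.le⟩ (right_mem_Icc.2 (ha t hlt).le)
        (by rw [hγ _ (hbmem _ ht), hmatch _ ht])
    · exact he
    · -- Overshooting contradicts injectivity of `h` on the piece of `b`.
      obtain ⟨y, hy, hya⟩ := hbij.surjOn (hamem (t + 1) ht)
      have h1 : y < b (t + 1) := by
        rw [← hmono.lt_iff_lt hy (hbmem _ ht), hya]
        exact hr
      have h2 : b t ≤ y := by
        rw [← hmono.le_iff_le (hbmem t hlt.le) hy, hya, iht]
        exact (ha t hlt).le
      have h3 : y = b (t + 1) := (hdir t hlt).symm.injOn ⟨h2, h1.le⟩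
        (right_mem_Icc.2 (hb t hlt).le) (by rw [← hγ y hy, hya, hmatch _ ht])
      exact absurd h3 h1.ne

/-- An increasing bijection between intervals is an order isomorphism, hence continuous. -/
lemma continuousOn_of_strictMonoOn_bijOn {γ : ℝ → ℝ} {p q r s : ℝ}
    (hmono : StrictMonoOn γ (Icc p q)) (hbij : BijOn γ (Icc p q) (Icc r s)) :
    ContinuousOn γ (Icc p q) := by
  let F : Icc p q → Icc r s := fun x => ⟨γ x, hbij.mapsTo x.2⟩
  have hF : StrictMono F := fun x y hxy => hmono x.2 y.2 hxy
  have hs : Function.Surjective F := fun y => by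
    obtain ⟨x, hx, hxy⟩ := hbij.surjOn y.2
    exact ⟨⟨x, hx⟩, Subtype.ext hxy⟩
  have hc : Continuous F := (hF.orderIsoOfSurjective F hs).continuous
  rw [continuousOn_iff_continuous_domRestrict]
  exact continuous_subtype_val.comp hc

/-- Construction of the matching warping function: given two partitions
0 = a₀ < ⋯ < a_K = 1 and 0 = b₀ < ⋯ < b_K = 1 and continuous functions g, g̃ on [0,1]
which on corresponding subintervals are strictly monotone with matching direction and
matching endpoint values g(a_t) = g̃(b_t), there is a unique continuous strictly
increasing bijection γ of [0,1] with g ∘ γ = g̃ on [0,1]; it satisfies γ(b_t) = a_t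
and is given piecewise on [b_t, b_{t+1}] as the inverse of g|_{[a_t,a_{t+1}]} applied
to g̃ (characterized by γ(x) ∈ [a_t, a_{t+1}] and g(γ(x)) = g̃(x)). -/
theorem matching_warping_function
    (K : ℕ) (hK : 1 ≤ K) (a b : ℕ → ℝ)
    (ha0 : a 0 = 0) (haK : a K = 1) (hamono : ∀ t < K, a t < a (t + 1))
    (hb0 : b 0 = 0) (hbK : b K = 1) (hbmono : ∀ t < K, b t < b (t + 1))
    (g gt : ℝ → ℝ)
    (hgcont : ContinuousOn g (Icc (0:ℝ) 1))
    (hgtcont : ContinuousOn gt (Icc (0:ℝ) 1))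
    (hmonotone : ∀ t < K,
      (StrictMonoOn g (Icc (a t) (a (t + 1))) ∧ StrictMonoOn gt (Icc (b t) (b (t + 1)))) ∨
      (StrictAntiOn g (Icc (a t) (a (t + 1))) ∧ StrictAntiOn gt (Icc (b t) (b (t + 1)))))
    (hmatch : ∀ t ≤ K, g (a t) = gt (b t)) :
    ∃ γ : ℝ → ℝ,
      (ContinuousOn γ (Icc (0:ℝ) 1) ∧
        StrictMonoOn γ (Icc (0:ℝ) 1) ∧
        Set.BijOn γ (Icc (0:ℝ) 1) (Icc (0:ℝ) 1) ∧
        (∀ x ∈ Icc (0:ℝ) 1, g (γ x) = gt x) ∧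
        (∀ t ≤ K, γ (b t) = a t) ∧
        (∀ t < K, ∀ x ∈ Icc (b t) (b (t + 1)),
          γ x ∈ Icc (a t) (a (t + 1)) ∧ g (γ x) = gt x)) ∧
      (∀ γ' : ℝ → ℝ,
        ContinuousOn γ' (Icc (0:ℝ) 1) →
        StrictMonoOn γ' (Icc (0:ℝ) 1) →
        Set.BijOn γ' (Icc (0:ℝ) 1) (Icc (0:ℝ) 1) →
        (∀ x ∈ Icc (0:ℝ) 1, g (γ' x) = gt x) →
        Set.EqOn γ' γ (Icc (0:ℝ) 1)) := by
  have hdir : ∀ t < K, SameDir g gt (Icc (a t) (a (t + 1))) (Icc (b t) (b (t + 1))) := hmonotone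
  have hdir' : ∀ t < K, SameDir gt g (Icc (b t) (b (t + 1))) (Icc (a t) (a (t + 1))) :=
    fun t ht => (hdir t ht).symm
  have hmatch' : ∀ t ≤ K, gt (b t) = g (a t) := fun t ht => (hmatch t ht).symm
  have hIa : Icc (0 : ℝ) 1 = Icc (a 0) (a K) := by rw [ha0, haK]
  have hIb : Icc (0 : ℝ) 1 = Icc (b 0) (b K) := by rw [hb0, hbK]
  have hle {x y x' y' : ℝ} (H : Matched K a b g gt x y) (H' : Matched K a b g gt x' y') :
      x ≤ x' ↔ y ≤ y' :=
    ⟨H.le hamono hbmono hdir hmatch H', H.symm.le hbmono hamono hdir' hmatch' H'.symm⟩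
  have huniq {x y y' : ℝ} (H : Matched K a b g gt x y) (H' : Matched K a b g gt x y') : y = y' :=
    le_antisymm ((hle H H').1 le_rfl) ((hle H' H).1 le_rfl)
  have hex : ∀ t < K, ∀ x ∈ Icc (b t) (b (t + 1)), ∃ y ∈ Icc (a t) (a (t + 1)), g y = gt x :=
    fun t ht x hx => Matched.exists_of_mem_piece hamono hbmono (hIa ▸ hgcont) hdir hmatch ht hx
  have hex' : ∀ t < K, ∀ y ∈ Icc (a t) (a (t + 1)), ∃ x ∈ Icc (b t) (b (t + 1)), gt x = g y :=
    fun t ht y hy => Matched.exists_of_mem_piece hbmono hamono (hIb ▸ hgtcont) hdir' hmatch' ht hy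
  have htot : ∀ x, ∃ y, x ∈ Icc (0 : ℝ) 1 → Matched K a b g gt x y := by
    intro x
    by_cases hx : x ∈ Icc (0 : ℝ) 1
    · obtain ⟨t, ht, hxt⟩ := exists_piece hK (hIb ▸ hx)
      obtain ⟨y, hy, e⟩ := hex t ht x hxt
      exact ⟨y, fun _ => ⟨t, ht, hxt, hy, e⟩⟩
    · exact ⟨0, fun h => absurd h hx⟩
  choose γ hγ using htot
  have hmem {x y : ℝ} (H : Matched K a b g gt x y) : x ∈ Icc (0 : ℝ) 1 ∧ y ∈ Icc (0 : ℝ) 1 := by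
    obtain ⟨t, ht, hx, hy, _⟩ := H
    rw [hIb]
    refine ⟨Icc_subset_Icc (knot_le hbmono (Nat.zero_le t) ht.le) (knot_le hbmono ht le_rfl) hx, ?_⟩
    rw [← hIb, hIa]
    exact Icc_subset_Icc (knot_le hamono (Nat.zero_le t) ht.le) (knot_le hamono ht le_rfl) hy
  have hγeq {x y : ℝ} (H : Matched K a b g gt x y) : γ x = y := huniq (hγ x (hmem H).1) H
  have hmono : StrictMonoOn γ (Icc (0 : ℝ) 1) := fun x hx x' hx' hxx =>
    lt_of_not_ge fun h => hxx.not_ge ((hle (hγ x' hx') (hγ x hx)).2 h)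
  have hbij : BijOn γ (Icc (0 : ℝ) 1) (Icc (0 : ℝ) 1) := by
    refine ⟨fun x hx => (hmem (hγ x hx)).2, hmono.injOn, fun y hy => ?_⟩
    obtain ⟨t, ht, hyt⟩ := exists_piece hK (hIa ▸ hy)
    obtain ⟨x, hx, e⟩ := hex' t ht y hyt
    have H : Matched K a b g gt x y := ⟨t, ht, hx, hyt, e.symm⟩
    exact ⟨x, (hmem H).1, hγeq H⟩
  have hsol : ∀ x ∈ Icc (0 : ℝ) 1, g (γ x) = gt x := fun x hx => by
    obtain ⟨_, _, _, _, e⟩ := hγ x hx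
    exact e
  have hknot {γ' : ℝ → ℝ} (h1 : StrictMonoOn γ' (Icc (0 : ℝ) 1))
      (h2 : BijOn γ' (Icc (0 : ℝ) 1) (Icc (0 : ℝ) 1))
      (h3 : ∀ x ∈ Icc (0 : ℝ) 1, g (γ' x) = gt x) : ∀ t ≤ K, γ' (b t) = a t := by
    refine eq_of_knot hamono hbmono hdir hmatch ?_ ?_ ?_
    · rwa [← hIb]
    · rwa [← hIb, ← hIa]
    · rwa [← hIb]
  refine ⟨γ, ⟨continuousOn_of_strictMonoOn_bijOn hmono hbij, hmono, hbij, hsol,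
    hknot hmono hbij hsol, fun t ht x hx => ?_⟩, fun γ' _ h1 h2 h3 x hx => ?_⟩
  · obtain ⟨y, hy, e⟩ := hex t ht x hx
    rw [hγeq ⟨t, ht, hx, hy, e⟩]
    exact ⟨hy, e⟩
  · obtain ⟨t, ht, hxt⟩ := exists_piece hK (hIb ▸ hx)
    have hk := hknot h1 h2 h3
    have hbt : b t ∈ Icc (0 : ℝ) 1 := by
      rw [hIb]
      exact ⟨knot_le hbmono (Nat.zero_le t) ht.le, knot_le hbmono ht.le le_rfl⟩
    have hbt1 : b (t + 1) ∈ Icc (0 : ℝ) 1 := by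
      rw [hIb]
      exact ⟨knot_le hbmono (Nat.zero_le _) ht, knot_le hbmono ht le_rfl⟩
    refine (hγeq ⟨t, ht, hxt, ⟨?_, ?_⟩, h3 x hx⟩).symm
    · rw [← hk t ht.le]
      exact h1.monotoneOn hbt hx hxt.1
    · rw [← hk (t + 1) ht]
      exact h1.monotoneOn hx hbt1 hxt.2
end

section
/- (Lemma 1, quantitative version.) Let L, m, K be constants with 0 < m ≤ K. Let g₁, g₂ : [0,1] → ℝ be L-Lipschitz functions with m ≤ g_k(t) ≤ K for all t ∈ [0,1], k = 1,2, and let γ₁, γ₂ : [0,1] → [0,1] be arbitrary functions. Define f_k(t) := g_k(γ_k(t)) / ∫₀¹ g_k(γ_k(s)) ds for k = 1, 2. Then for all t ∈ [0,1], |f₁(t) − f₂(t)| ≤ (1/m + K/m²)·( L·sup_{s∈[0,1]} |γ₁(s) − γ₂(s)| + sup_{s∈[0,1]} |g₁(s) − g₂(s)| ). -/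
open Set MeasureTheory intervalIntegral

/-!
Write `a = g₁ ∘ γ₁`, `b = g₂ ∘ γ₂`, with integrals `A`, `B` over `[0,1]`.  Inserting `g₁ (γ₂ s)` and
using the Lipschitz bound for `g₁` gives `|a s - b s| ≤ D`, where
`D = L * sup |γ₁ - γ₂| + sup |g₁ - g₂|`, hence also `|A - B| ≤ D`; moreover `A, B ≥ m`.
The claim follows from `a / A - b / B = (a - b) / A + (b / B) * ((B - A) / A)`, which is the
content of `abs_div_sub_div_le`.
-/

/-- Stability of a quotient under perturbations of size `D` of numerator and denominator. -/
lemma abs_div_sub_div_le {a b A B m K D : ℝ} (hm : 0 < m) (hA : m ≤ A) (hB : m ≤ B)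
    (hb0 : 0 ≤ b) (hb : b ≤ K) (hab : |a - b| ≤ D) (hAB : |A - B| ≤ D) :
    |a / A - b / B| ≤ (1 / m + K / m ^ 2) * D := by
  have hA0 : 0 < A := hm.trans_le hA
  have hB0 : 0 < B := hm.trans_le hB
  have hD : 0 ≤ D := (abs_nonneg _).trans hab
  have hK : 0 ≤ K := hb0.trans hb
  have key : a / A - b / B = (a - b) / A + (b / B) * ((B - A) / A) := by
    field_simp
    ring
  calc |a / A - b / B| ≤ |(a - b) / A| + |(b / B) * ((B - A) / A)| := by
        rw [key]; exact abs_add_le _ _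
    _ = |a - b| / A + (b / B) * (|A - B| / A) := by
        rw [abs_mul, abs_div, abs_div, abs_div, abs_of_pos hA0, abs_of_pos hB0,
          abs_of_nonneg hb0, abs_sub_comm B A]
    _ ≤ D / m + (K / m) * (D / m) := by gcongr
    _ = (1 / m + K / m ^ 2) * D := by field_simp

/-- Over the unit interval, the integral is at least any pointwise lower bound. -/
lemma le_integral_unit {f : ℝ → ℝ} {m : ℝ} (hf : IntervalIntegrable f volume 0 1)
    (h : ∀ s ∈ Icc (0:ℝ) 1, m ≤ f s) : m ≤ ∫ s in (0:ℝ)..1, f s := by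
  have := integral_mono_on (μ := volume) zero_le_one intervalIntegrable_const hf h
  simpa using this

/-- Lemma 1, quantitative version: let g₁, g₂ be L-Lipschitz on [0,1]
with m ≤ g_k ≤ K (0 < m ≤ K) and let γ₁, γ₂ : [0,1] → [0,1] be arbitrary functions
(such that the compositions g_k ∘ γ_k are integrable, so that the normalized densities
f_k = (g_k ∘ γ_k)/∫₀¹ g_k ∘ γ_k are defined).  Then for all t ∈ [0,1],
|f₁(t) − f₂(t)| ≤ (1/m + K/m²)·(L·sup_s |γ₁(s) − γ₂(s)| + sup_s |g₁(s) − g₂(s)|). -/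
theorem warped_template_lipschitz_in_parameters
    (L m K : ℝ) (hm : 0 < m) (hmK : m ≤ K)
    (g₁ g₂ γ₁ γ₂ : ℝ → ℝ)
    (hg₁lip : ∀ x ∈ Icc (0:ℝ) 1, ∀ y ∈ Icc (0:ℝ) 1, |g₁ x - g₁ y| ≤ L * |x - y|)
    (hg₂lip : ∀ x ∈ Icc (0:ℝ) 1, ∀ y ∈ Icc (0:ℝ) 1, |g₂ x - g₂ y| ≤ L * |x - y|)
    (hg₁bounds : ∀ t ∈ Icc (0:ℝ) 1, m ≤ g₁ t ∧ g₁ t ≤ K)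
    (hg₂bounds : ∀ t ∈ Icc (0:ℝ) 1, m ≤ g₂ t ∧ g₂ t ≤ K)
    (hγ₁maps : Set.MapsTo γ₁ (Icc (0:ℝ) 1) (Icc (0:ℝ) 1))
    (hγ₂maps : Set.MapsTo γ₂ (Icc (0:ℝ) 1) (Icc (0:ℝ) 1))
    (hint₁ : IntervalIntegrable (fun s => g₁ (γ₁ s)) MeasureTheory.volume 0 1)
    (hint₂ : IntervalIntegrable (fun s => g₂ (γ₂ s)) MeasureTheory.volume 0 1) :
    ∀ t ∈ Icc (0:ℝ) 1,
      |g₁ (γ₁ t) / (∫ s in (0:ℝ)..1, g₁ (γ₁ s)) -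
          g₂ (γ₂ t) / (∫ s in (0:ℝ)..1, g₂ (γ₂ s))| ≤
        (1 / m + K / m ^ 2) *
          (L * (⨆ s : Icc (0:ℝ) 1, |γ₁ s - γ₂ s|) +
            ⨆ s : Icc (0:ℝ) 1, |g₁ s - g₂ s|) := by
  have h0 : (0:ℝ) ∈ Icc (0:ℝ) 1 := by simp
  have h1 : (1:ℝ) ∈ Icc (0:ℝ) 1 := by simp
  have hL : 0 ≤ L := by simpa using (abs_nonneg _).trans (hg₁lip 1 h1 0 h0)
  -- Without these bounds the suprema would take the junk value `0`.
  have hbddγ : BddAbove (range fun s : Icc (0:ℝ) 1 => |γ₁ s - γ₂ s|) := by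
    refine ⟨1, ?_⟩
    rintro _ ⟨s, rfl⟩
    have p := hγ₁maps s.2
    have q := hγ₂maps s.2
    exact abs_le.2 ⟨by linarith [p.1, q.2], by linarith [p.2, q.1]⟩
  have hbddg : BddAbove (range fun s : Icc (0:ℝ) 1 => |g₁ s - g₂ s|) := by
    refine ⟨K - m, ?_⟩
    rintro _ ⟨s, rfl⟩
    have p := hg₁bounds s s.2
    have q := hg₂bounds s s.2
    exact abs_le.2 ⟨by linarith [p.1, q.2], by linarith [p.2, q.1]⟩
  set S := ⨆ s : Icc (0:ℝ) 1, |γ₁ s - γ₂ s|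
  set T := ⨆ s : Icc (0:ℝ) 1, |g₁ s - g₂ s|
  have hpt : ∀ s ∈ Icc (0:ℝ) 1, |g₁ (γ₁ s) - g₂ (γ₂ s)| ≤ L * S + T := by
    intro s hs
    have hS : |γ₁ s - γ₂ s| ≤ S := le_ciSup hbddγ ⟨s, hs⟩
    have hT : |g₁ (γ₂ s) - g₂ (γ₂ s)| ≤ T := le_ciSup hbddg ⟨γ₂ s, hγ₂maps hs⟩
    calc |g₁ (γ₁ s) - g₂ (γ₂ s)|
        ≤ |g₁ (γ₁ s) - g₁ (γ₂ s)| + |g₁ (γ₂ s) - g₂ (γ₂ s)| := abs_sub_le _ _ _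
      _ ≤ L * |γ₁ s - γ₂ s| + |g₁ (γ₂ s) - g₂ (γ₂ s)| := by
          gcongr
          exact hg₁lip _ (hγ₁maps hs) _ (hγ₂maps hs)
      _ ≤ L * S + T := by gcongr
  have hdiff : |(∫ s in (0:ℝ)..1, g₁ (γ₁ s)) - ∫ s in (0:ℝ)..1, g₂ (γ₂ s)| ≤ L * S + T := by
    rw [← integral_sub hint₁ hint₂]
    have := norm_integral_le_of_norm_le_const (a := (0:ℝ)) (b := 1)
      (f := fun s => g₁ (γ₁ s) - g₂ (γ₂ s)) (C := L * S + T) (by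
        intro s hs
        rw [uIoc_of_le zero_le_one] at hs
        exact hpt s (Ioc_subset_Icc_self hs))
    simpa using this
  intro t ht
  have hb := hg₂bounds _ (hγ₂maps ht)
  exact abs_div_sub_div_le hm
    (le_integral_unit hint₁ fun s hs => (hg₁bounds _ (hγ₁maps hs)).1)
    (le_integral_unit hint₂ fun s hs => (hg₂bounds _ (hγ₂maps hs)).1)
    (hm.le.trans hb.1) hb.2 (hpt t ht) hdiff
end

section
/- (Lipschitz dependence of the warping function on its coefficients.) Let J ≥ 1 and let B₁, …, B_J : [0,1] → ℝ be continuous functions with sup_t |B_j(t)| ≤ b̄ for all j. For c ∈ ℝ^J define v_c := Σ_{j=1}^J c_j B_j, r_c := (∫₀¹ v_c(s)² ds)^{1/2}, q_c(s) := cos(r_c) + sinc(r_c)·v_c(s) where sinc(r) := sin(r)/r for r ≠ 0 and sinc(0) := 1, and γ_c(t) := ∫₀ᵗ q_c(s)² ds. Then for every l₀ > 0 there exists a constant M₂ > 0 such that for all c, c' ∈ ℝ^J with max_j |c_j| ≤ l₀ and max_j |c'_j| ≤ l₀, and all t ∈ [0,1], |γ_c(t) − γ_{c'}(t)| ≤ M₂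 · Σ_{j=1}^J |c_j − c'_j|. -/
/-!
The map `c ↦ v_c` is linear, so `|v_c - v_{c'}| ≤ |b̄| · Σ_j |c_j - c'_j|` pointwise on `[0,1]`.
By Minkowski's inequality the norms `r_c`, `r_{c'}` differ by at most the same quantity
(`sqrt_integral_sq_le_add`). Both `cos` and `sinc` are 1-Lipschitz and bounded by 1; for `sinc`
this is read off from `sinc x = ∫₀¹ cos (x u) du` (`rsinc_eq_integral`). Hence `q_c` is
bounded and Lipschitz in `c` on the box `max_j |c_j| ≤ l₀`, uniformly on `[0,1]`; so is its square,
and integrating over `[0,t]` with `t ≤ 1` keeps the constant.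
-/

open Set MeasureTheory intervalIntegral

/-- `sinc r = sin r / r` for `r ≠ 0`, with `sinc 0 = 1`. -/
noncomputable def rsinc (r : ℝ) : ℝ := if r = 0 then 1 else Real.sin r / r

/-- The tangent vector `v_c = Σ_j c_j B_j` determined by a coefficient vector `c`. -/
noncomputable def tangentVec {J : ℕ} (B : Fin J → ℝ → ℝ) (c : Fin J → ℝ) (s : ℝ) : ℝ :=
  ∑ j, c j * B j s

/-- The L²-norm `r_c = (∫₀¹ v_c²)^{1/2}` of the tangent vector. -/
noncomputable def tangentNorm {J : ℕ} (B : Fin J → ℝ → ℝ) (c : Fin J → ℝ) : ℝ :=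
  Real.sqrt (∫ s in (0:ℝ)..1, (tangentVec B c s) ^ 2)

/-- The SRSF `q_c(s) = cos(r_c) + sinc(r_c)·v_c(s)` obtained by the exponential map. -/
noncomputable def srsfOf {J : ℕ} (B : Fin J → ℝ → ℝ) (c : Fin J → ℝ) (s : ℝ) : ℝ :=
  Real.cos (tangentNorm B c) + rsinc (tangentNorm B c) * tangentVec B c s

/-- The warping function `γ_c(t) = ∫₀ᵗ q_c(s)² ds` associated to the coefficient
vector `c` via the composite map `G`. -/
noncomputable def warpOf {J : ℕ} (B : Fin J → ℝ → ℝ) (c : Fin J → ℝ) (t : ℝ) : ℝ :=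
  ∫ s in (0:ℝ)..t, (srsfOf B c s) ^ 2

/-- The representation of `sinc` as an average of cosines, also valid at `x = 0`. -/
lemma rsinc_eq_integral (x : ℝ) : rsinc x = ∫ u in (0:ℝ)..1, Real.cos (x * u) := by
  unfold rsinc
  split_ifs with h
  · simp [h]
  · rw [intervalIntegral.integral_comp_mul_left (fun y => Real.cos y) h]
    simp [div_eq_inv_mul]

lemma abs_rsinc_le_one (x : ℝ) : |rsinc x| ≤ 1 := Real.abs_sinc_le_one x

lemma abs_cos_sub_cos_le (x y : ℝ) : |Real.cos x - Real.cos y| ≤ |x - y| := by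
  have h := Convex.norm_image_sub_le_of_norm_deriv_le (f := Real.cos) (C := 1) (s := Set.univ)
    (x := y) (y := x) (fun z _ => Real.differentiable_cos z)
    (fun z _ => by simpa using Real.abs_sin_le_one z) convex_univ trivial trivial
  simpa using h

lemma abs_rsinc_sub_le (x y : ℝ) : |rsinc x - rsinc y| ≤ |x - y| := by
  rw [rsinc_eq_integral, rsinc_eq_integral, ← intervalIntegral.integral_sub
    (Continuous.intervalIntegrable (by fun_prop) _ _)
    (Continuous.intervalIntegrable (by fun_prop) _ _)]
  have h := intervalIntegral.norm_integral_le_of_norm_le_const (a := (0:ℝ)) (b := 1)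
    (f := fun u => Real.cos (x * u) - Real.cos (y * u)) (C := |x - y|) (by
      intro u hu
      rw [Set.uIoc_of_le zero_le_one] at hu
      calc ‖Real.cos (x * u) - Real.cos (y * u)‖ ≤ |x * u - y * u| := abs_cos_sub_cos_le _ _
        _ = |x - y| * u := by rw [← sub_mul, abs_mul, abs_of_pos hu.1]
        _ ≤ |x - y| := mul_le_of_le_one_right (abs_nonneg _) hu.2)
  simpa using h

/-- Minkowski's inequality in `L²[0,1]` for a perturbation bounded uniformly by `D`. -/
lemma sqrt_integral_sq_le_add {f g : ℝ → ℝ} {D : ℝ} (hf : ContinuousOn f (Icc 0 1))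
    (hg : ContinuousOn g (Icc 0 1)) (hD : 0 ≤ D) (h : ∀ s ∈ Icc (0:ℝ) 1, |f s - g s| ≤ D) :
    Real.sqrt (∫ s in (0:ℝ)..1, f s ^ 2) ≤ Real.sqrt (∫ s in (0:ℝ)..1, g s ^ 2) + D := by
  have hint : ∀ {k : ℝ → ℝ}, ContinuousOn k (Icc 0 1) → IntervalIntegrable k volume 0 1 :=
    fun hk => ContinuousOn.intervalIntegrable (by rwa [Set.uIcc_of_le zero_le_one])
  have hf2 : IntervalIntegrable (fun s => f s ^ 2) volume 0 1 := hint (hf.pow 2)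
  have hg2 : IntervalIntegrable (fun s => g s ^ 2) volume 0 1 := hint (hg.pow 2)
  have hga := hint hg.abs
  set R := ∫ s in (0:ℝ)..1, g s ^ 2 with hR
  set m := ∫ s in (0:ℝ)..1, |g s| with hm
  have hR0 : 0 ≤ R := intervalIntegral.integral_nonneg zero_le_one fun s _ => sq_nonneg _
  -- Jensen: integrate `0 ≤ (|g| - m)²`, rearranged as `2 m |g| - m² ≤ g²`.
  have hmR : m ^ 2 ≤ R := by
    have := intervalIntegral.integral_mono_on zero_le_one
      ((hga.const_mul (2 * m)).sub (intervalIntegrable_const (c := m ^ 2))) hg2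
      (fun s _ => by
        have h1 := sq_nonneg (|g s| - m)
        have h2 := sq_abs (g s)
        show 2 * m * |g s| - m ^ 2 ≤ g s ^ 2
        nlinarith)
    rw [intervalIntegral.integral_sub (hga.const_mul (2 * m)) intervalIntegrable_const,
      intervalIntegral.integral_const_mul, ← hm] at this
    simp only [intervalIntegral.integral_const, sub_zero, one_smul] at this
    nlinarith
  have hmle : m ≤ Real.sqrt R := Real.le_sqrt_of_sq_le hmR
  have hfR : ∫ s in (0:ℝ)..1, f s ^ 2 ≤ R + 2 * D * m + D ^ 2 := by
    have hi := (hg2.add (hga.const_mul (2 * D))).add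
      (intervalIntegrable_const (c := D ^ 2))
    have := intervalIntegral.integral_mono_on zero_le_one hf2 hi
      (fun s hs => by
        have h1 : |f s| ≤ |g s| + D := by
          have := abs_sub_abs_le_abs_sub (f s) (g s)
          linarith [h s hs]
        have h2 := sq_abs (g s)
        have h3 := sq_abs (f s)
        have h4 := pow_le_pow_left₀ (abs_nonneg _) h1 2
        show f s ^ 2 ≤ g s ^ 2 + 2 * D * |g s| + D ^ 2
        nlinarith)
    rw [intervalIntegral.integral_add (hg2.add (hga.const_mul (2 * D))) intervalIntegrable_const,
      intervalIntegral.integral_add hg2 (hga.const_mul (2 * D)),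
      intervalIntegral.integral_const_mul, ← hm] at this
    simpa using this
  refine Real.sqrt_le_iff.mpr ⟨by positivity, hfR.trans ?_⟩
  nlinarith [Real.sq_sqrt hR0, mul_le_mul_of_nonneg_left hmle hD]

lemma continuousOn_tangentVec {J : ℕ} {B : Fin J → ℝ → ℝ}
    (hB : ∀ j, ContinuousOn (B j) (Icc (0:ℝ) 1)) (c : Fin J → ℝ) :
    ContinuousOn (tangentVec B c) (Icc 0 1) :=
  continuousOn_finsetSum _ fun j _ => continuousOn_const.mul (hB j)

lemma abs_tangentVec_sub_le {J : ℕ} {B : Fin J → ℝ → ℝ} {b s : ℝ} (hB : ∀ j, |B j s| ≤ b)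
    (c c' : Fin J → ℝ) :
    |tangentVec B c s - tangentVec B c' s| ≤ b * ∑ j, |c j - c' j| := by
  unfold tangentVec
  rw [← Finset.sum_sub_distrib, Finset.mul_sum]
  refine (Finset.abs_sum_le_sum_abs _ _).trans (Finset.sum_le_sum fun j _ => ?_)
  rw [← sub_mul, abs_mul, mul_comm]
  exact mul_le_mul_of_nonneg_right (hB j) (abs_nonneg _)

lemma abs_tangentVec_le {J : ℕ} {B : Fin J → ℝ → ℝ} {b s l : ℝ} (hb : 0 ≤ b)
    (hB : ∀ j, |B j s| ≤ b) {c : Fin J → ℝ} (hc : ∀ j, |c j| ≤ l) :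
    |tangentVec B c s| ≤ b * (J * l) := by
  have h := abs_tangentVec_sub_le hB c 0
  have h0 : tangentVec B 0 s = 0 := by simp [tangentVec]
  rw [h0, sub_zero] at h
  refine h.trans (mul_le_mul_of_nonneg_left ?_ hb)
  calc ∑ j, |c j - (0 : Fin J → ℝ) j| ≤ ∑ _j : Fin J, l :=
        Finset.sum_le_sum fun j _ => by simpa using hc j
    _ = J * l := by simp

lemma abs_srsfOf_le {J : ℕ} {B : Fin J → ℝ → ℝ} {c : Fin J → ℝ} {s V : ℝ}
    (h : |tangentVec B c s| ≤ V) : |srsfOf B c s| ≤ 1 + V := by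
  unfold srsfOf
  refine (abs_add_le _ _).trans (add_le_add (Real.abs_cos_le_one _) ?_)
  rw [abs_mul]
  exact (mul_le_of_le_one_left (abs_nonneg _) (abs_rsinc_le_one _)).trans h

lemma abs_srsfOf_sub_le {J : ℕ} {B : Fin J → ℝ → ℝ} {c c' : Fin J → ℝ} {s V D : ℝ}
    (hV : |tangentVec B c s| ≤ V) (hD : |tangentVec B c s - tangentVec B c' s| ≤ D)
    (hr : |tangentNorm B c - tangentNorm B c'| ≤ D) :
    |srsfOf B c s - srsfOf B c' s| ≤ (2 + V) * D := by
  unfold srsfOf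
  set r := tangentNorm B c
  set r' := tangentNorm B c'
  set v := tangentVec B c s
  set v' := tangentVec B c' s
  have hD0 : 0 ≤ D := (abs_nonneg _).trans hD
  have h1 : |Real.cos r - Real.cos r'| ≤ D := (abs_cos_sub_cos_le _ _).trans hr
  have h2 : |(rsinc r - rsinc r') * v| ≤ D * V := by
    rw [abs_mul]
    exact mul_le_mul ((abs_rsinc_sub_le _ _).trans hr) hV (abs_nonneg _) hD0
  have h3 : |rsinc r' * (v - v')| ≤ D := by
    rw [abs_mul]
    exact (mul_le_of_le_one_left (abs_nonneg _) (abs_rsinc_le_one _)).trans hD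
  calc |Real.cos r + rsinc r * v - (Real.cos r' + rsinc r' * v')|
      = |(Real.cos r - Real.cos r') + (rsinc r - rsinc r') * v + rsinc r' * (v - v')| := by
        congr 1; ring
    _ ≤ |Real.cos r - Real.cos r'| + |(rsinc r - rsinc r') * v| + |rsinc r' * (v - v')| :=
        abs_add_three _ _ _
    _ ≤ (2 + V) * D := by linarith

/-- Lipschitz dependence of the warping function on its coefficients:
for continuous basis functions B₁, …, B_J uniformly bounded by b̄ and any l₀ > 0,
there is M₂ > 0 such that for all coefficient vectors c, c' with sup-norm ≤ l₀ and
all t ∈ [0,1], |γ_c(t) − γ_{c'}(t)| ≤ M₂ · Σ_j |c_j − c'_j|. -/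
theorem warping_lipschitz_in_coefficients
    (J : ℕ) (hJ : 1 ≤ J) (B : Fin J → ℝ → ℝ) (bbar : ℝ)
    (hBcont : ∀ j, ContinuousOn (B j) (Icc (0:ℝ) 1))
    (hBbdd : ∀ j, ∀ t ∈ Icc (0:ℝ) 1, |B j t| ≤ bbar)
    (l₀ : ℝ) (hl₀ : 0 < l₀) :
    ∃ M₂ > 0, ∀ c c' : Fin J → ℝ,
      (∀ j, |c j| ≤ l₀) → (∀ j, |c' j| ≤ l₀) →
      ∀ t ∈ Icc (0:ℝ) 1,
        |warpOf B c t - warpOf B c' t| ≤ M₂ * ∑ j, |c j - c' j| := by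
  set b := |bbar| with hb
  have hb0 : 0 ≤ b := abs_nonneg _
  have hB : ∀ s ∈ Icc (0:ℝ) 1, ∀ j, |B j s| ≤ b := fun s hs j =>
    (hBbdd j s hs).trans (le_abs_self _)
  set V := b * (J * l₀) with hV
  have hV0 : 0 ≤ V := by positivity
  -- The summand `1` only serves to make the constant positive when `b̄ = 0`.
  refine ⟨2 * (1 + V) * ((2 + V) * b) + 1, by positivity, ?_⟩
  intro c c' hc hc' t ht
  set S := ∑ j, |c j - c' j| with hS
  have hS0 : 0 ≤ S := Finset.sum_nonneg fun j _ => abs_nonneg _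
  have hD : ∀ s ∈ Icc (0:ℝ) 1, |tangentVec B c s - tangentVec B c' s| ≤ b * S :=
    fun s hs => abs_tangentVec_sub_le (hB s hs) c c'
  have hcont := continuousOn_tangentVec hBcont
  have hr : |tangentNorm B c - tangentNorm B c'| ≤ b * S := by
    have h1 := sqrt_integral_sq_le_add (hcont c) (hcont c') (by positivity) hD
    have h2 := sqrt_integral_sq_le_add (D := b * S) (hcont c') (hcont c) (by positivity)
      (fun s hs => by rw [abs_sub_comm]; exact hD s hs)
    unfold tangentNorm
    rw [abs_sub_le_iff]
    constructor <;> linarith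
  have hint : ∀ d, IntervalIntegrable (fun s => srsfOf B d s ^ 2) volume 0 t := fun d => by
    refine ContinuousOn.intervalIntegrable ?_
    rw [Set.uIcc_of_le ht.1]
    exact ((continuousOn_const.add (continuousOn_const.mul (hcont d))).pow 2).mono
      (Icc_subset_Icc_right ht.2)
  unfold warpOf
  rw [← intervalIntegral.integral_sub (hint c) (hint c')]
  set K := 2 * (1 + V) * ((2 + V) * b) with hK
  have hK0 : 0 ≤ K := by positivity
  have key := intervalIntegral.norm_integral_le_of_norm_le_const (a := (0:ℝ)) (b := t)
    (f := fun s => srsfOf B c s ^ 2 - srsfOf B c' s ^ 2) (C := K * S) (by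
      intro s hs
      rw [Set.uIoc_of_le ht.1] at hs
      have hs' : s ∈ Icc (0:ℝ) 1 := ⟨hs.1.le, hs.2.trans ht.2⟩
      have hv := abs_tangentVec_le hb0 (hB s hs') hc
      have hv' := abs_tangentVec_le hb0 (hB s hs') hc'
      have h1 := abs_srsfOf_sub_le hv (hD s hs') hr
      have h2 : |srsfOf B c s + srsfOf B c' s| ≤ 2 * (1 + V) :=
        (abs_add_le _ _).trans (by linarith [abs_srsfOf_le hv, abs_srsfOf_le hv'])
      rw [Real.norm_eq_abs, sq_sub_sq, abs_mul]
      calc _ ≤ 2 * (1 + V) * ((2 + V) * (b * S)) :=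
            mul_le_mul h2 h1 (abs_nonneg _) (by positivity)
        _ = K * S := by rw [hK]; ring)
  rw [Real.norm_eq_abs, sub_zero, abs_of_nonneg ht.1] at key
  calc _ ≤ K * S * t := key
    _ ≤ K * S := mul_le_of_le_one_right (by positivity) ht.2
    _ ≤ (K + 1) * S := by nlinarith
end
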